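/- arXiv:math/0612273 — 6 statements merged into one kernel-verified Lean document; each statement's English description precedes it below -/
import Mathlib

section
/- For n ≥ 1 there is a homeomorphism (𝕋^n/𝒢ₙ)/(ℤ/nℤ) ≅ ((𝕋^n/𝕋)/(ℤ/nℤ)) × 𝕋, where 𝒢ₙ = {(ω,…,ω) : ω^n = 1} is the subgroup of diagonal n-th roots of unity in 𝕋^n, and ℤ/nℤ acts on 𝕋^n/𝒢ₙ and on 𝕋^n/𝕋 by cyclic permutation of coordinates. -/
/-!
The map `F : 𝕋^n → (𝕋^n/𝕋)/(ℤ/nℤ) × 𝕋`, `z ↦ ([z], ∏ i, z i)`, is the source of the homeomorphism.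
It is onto because multiplying `z` by a scalar `t` multiplies `∏ i, z i` by `t ^ n`, and every element
of `𝕋` has an `n`-th root. Its fibres are those of `𝕋^n → (𝕋^n/𝒢ₙ)/(ℤ/nℤ)`: shifts preserve the
product, and a diagonal element lies in `𝒢ₙ` exactly when its product is `1`.

The space `(𝕋^n/𝕋)/(ℤ/nℤ)` is Hausdorff (the projection from `𝕋^n` is open with closed kernel) and
`𝕋^n` is compact, so `F` is a closed map, hence a quotient map. Two quotient maps out of `𝕋^n` with the
same fibres have homeomorphic targets.
-/


noncomputable section

/-- The `n`-torus `𝕋^n`, with coordinates indexed by `ZMod n`. -/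
abbrev Torus (n : ℕ) : Type := ZMod n → Circle

/-- The diagonal copy of the circle `𝕋` inside `𝕋^n`. -/
def diagSubgroup (n : ℕ) : Subgroup (Torus n) :=
  MonoidHom.range
    { toFun := fun (t : Circle) (_ : ZMod n) => t
      map_one' := rfl
      map_mul' := fun _ _ => rfl }

/-- The quotient topological group `𝕋^n/𝕋` by the diagonal circle. -/
abbrev TorusQuot (n : ℕ) : Type := Torus n ⧸ diagSubgroup n

/-- The subgroup `𝒢ₙ = {(ω,…,ω) : ω^n = 1}` of diagonal `n`-th roots of unity in `𝕋^n`. -/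
def rootsSubgroup (n : ℕ) : Subgroup (Torus n) where
  carrier := {z : Torus n | ∃ ω : ℂ, ω ^ n = 1 ∧ ∀ i : ZMod n, (z i : ℂ) = ω}
  one_mem' := ⟨1, one_pow n, fun _ => rfl⟩
  mul_mem' := by
    rintro z w ⟨ω, hω, hz⟩ ⟨ω', hω', hw⟩
    exact ⟨ω * ω', by rw [mul_pow, hω, hω', one_mul],
      fun i => by simp [hz i, hw i]⟩
  inv_mem' := by
    rintro z ⟨ω, hω, hz⟩
    exact ⟨ω⁻¹, by rw [inv_pow, hω, inv_one],
      fun i => by simp [hz i]⟩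

/-- The cyclic shift action of `k ∈ ℤ/nℤ` on `𝕋^n`: `(k · z)(i) = z(i + k)`. -/
def shift (n : ℕ) (k : ZMod n) (z : Torus n) : Torus n := fun i => z (i + k)

/-- The orbit relation, on `𝕋^n/𝒢ₙ`, of the cyclic permutation action of `ℤ/nℤ`
(descended from the shift action on `𝕋^n`). -/
def orbitRelG (n : ℕ) (x y : Torus n ⧸ rootsSubgroup n) : Prop :=
  ∃ (k : ZMod n) (z : Torus n),
    x = QuotientGroup.mk z ∧ y = QuotientGroup.mk (shift n k z)

/-- The orbit relation, on `𝕋^n/𝕋`, of the cyclic permutation action of `ℤ/nℤ`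
(descended from the shift action on `𝕋^n`). -/
def orbitRelT (n : ℕ) (x y : TorusQuot n) : Prop :=
  ∃ (k : ZMod n) (z : Torus n),
    x = QuotientGroup.mk z ∧ y = QuotientGroup.mk (shift n k z)

/-- The orbit relation of the shift action on `𝕋^n/H`; it specializes definitionally to
`orbitRelG` and `orbitRelT`. -/
def orbitRel (n : ℕ) (H : Subgroup (Torus n)) (x y : Torus n ⧸ H) : Prop :=
  ∃ (k : ZMod n) (z : Torus n),
    x = QuotientGroup.mk z ∧ y = QuotientGroup.mk (shift n k z)

/-- The projection `𝕋^n → (𝕋^n/H)/(ℤ/nℤ)`. -/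
def proj (n : ℕ) (H : Subgroup (Torus n)) (z : Torus n) : Quot (orbitRel n H) :=
  Quot.mk _ (QuotientGroup.mk z)

lemma shift_zero (n : ℕ) (z : Torus n) : shift n 0 z = z := by
  funext i; simp [shift]

lemma shift_shift (n : ℕ) (k l : ZMod n) (z : Torus n) :
    shift n k (shift n l z) = shift n (k + l) z := by
  funext i; simp [shift, add_assoc]

lemma shift_mul (n : ℕ) (k : ZMod n) (z w : Torus n) :
    shift n k (z * w) = shift n k z * shift n k w := rfl

lemma continuous_shift (n : ℕ) (k : ZMod n) : Continuous (shift n k) := by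
  unfold shift; fun_prop

lemma prod_shift (n : ℕ) [NeZero n] (k : ZMod n) (z : Torus n) :
    ∏ i, shift n k z i = ∏ i, z i :=
  Equiv.prod_comp (Equiv.addRight k) z

lemma mem_diag_iff (n : ℕ) (z : Torus n) :
    z ∈ diagSubgroup n ↔ ∀ i, z i = z 0 := by
  constructor
  · rintro ⟨t, rfl⟩ i
    rfl
  · intro h
    exact ⟨z 0, funext fun i => (h i).symm⟩

lemma mem_roots_iff (n : ℕ) [NeZero n] (z : Torus n) :
    z ∈ rootsSubgroup n ↔ z ∈ diagSubgroup n ∧ ∏ i, z i = 1 := by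
  have key : (∀ i, z i = z 0) → ∏ i, z i = z 0 ^ n := fun h => by
    rw [Finset.prod_congr rfl fun i _ => h i]
    simp [ZMod.card]
  rw [mem_diag_iff]
  constructor
  · rintro ⟨ω, hω, h⟩
    have h0 : ∀ i, z i = z 0 := fun i => Circle.ext ((h i).trans (h 0).symm)
    refine ⟨h0, ?_⟩
    rw [key h0]
    apply Circle.ext
    simp [h 0, hω]
  · rintro ⟨h0, h⟩
    rw [key h0] at h
    refine ⟨z 0, ?_, fun i => by rw [h0 i]⟩
    rw [← Circle.coe_pow, h, Circle.coe_one]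

lemma shift_of_mem_diag (n : ℕ) (k : ZMod n) {z : Torus n} (hz : z ∈ diagSubgroup n) :
    shift n k z = z := by
  rw [mem_diag_iff] at hz
  funext i
  simp only [shift]
  rw [hz, hz i]

/-- If shifts fix `H` pointwise, `orbitRel n H` is already an equivalence relation, so it coincides
with the equality of classes in `Quot`. -/
lemma proj_eq_iff (n : ℕ) {H : Subgroup (Torus n)} (hH : H ≤ diagSubgroup n) (z w : Torus n) :
    proj n H z = proj n H w ↔ ∃ k, (shift n k z)⁻¹ * w ∈ H := by
  have he : Equivalence (orbitRel n H) := by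
    refine ⟨fun x => ?_, ?_, ?_⟩
    · obtain ⟨z, rfl⟩ := QuotientGroup.mk_surjective x
      exact ⟨0, z, rfl, by rw [shift_zero]⟩
    · rintro x y ⟨k, z, rfl, rfl⟩
      exact ⟨-k, shift n k z, rfl, by rw [shift_shift, neg_add_cancel, shift_zero]⟩
    · rintro x y u ⟨k, z, rfl, rfl⟩ ⟨l, z', h, rfl⟩
      refine ⟨l + k, z, rfl, ?_⟩
      rw [QuotientGroup.eq] at h
      rw [eq_comm, QuotientGroup.eq]
      have := shift_of_mem_diag n l (hH h)
      rw [← shift_shift]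
      rw [← this] at h
      exact h
  unfold proj
  rw [Quot.eq, he.eqvGen_iff]
  constructor
  · rintro ⟨k, u, h1, h2⟩
    rw [QuotientGroup.eq] at h1 h2
    refine ⟨k, ?_⟩
    have h3 : (shift n k z)⁻¹ * shift n k u ∈ H := by
      have := shift_of_mem_diag n k (hH h1)
      rw [← this] at h1
      exact h1
    have := H.mul_mem h3 (H.inv_mem h2)
    convert this using 1
    group
  · rintro ⟨k, h⟩
    exact ⟨k, z, rfl, (QuotientGroup.eq.2 h).symm⟩

lemma isQuotientMap_proj (n : ℕ) (H : Subgroup (Torus n)) :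
    Topology.IsQuotientMap (proj n H) :=
  isQuotientMap_quot_mk.comp (QuotientGroup.isQuotientMap_mk H)

lemma isOpenQuotientMap_proj (n : ℕ) {H : Subgroup (Torus n)} (hH : H ≤ diagSubgroup n) :
    IsOpenQuotientMap (proj n H) := by
  have hq := isQuotientMap_proj n H
  refine ⟨hq.surjective, hq.continuous, fun U hU => ?_⟩
  rw [← hq.isOpen_preimage]
  -- The saturation of `U` is the union of its translates by shifts and by elements of `H`.
  have : proj n H ⁻¹' (proj n H '' U) =
      ⋃ (k : ZMod n) (h : H), (fun w => shift n k w * (h : Torus n)) ⁻¹' U := by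
    ext w
    simp only [Set.mem_preimage, Set.mem_image, Set.mem_iUnion]
    constructor
    · rintro ⟨z, hz, h⟩
      obtain ⟨k, hk⟩ := (proj_eq_iff n hH w z).1 h.symm
      exact ⟨k, ⟨_, hk⟩, by simpa using hz⟩
    · rintro ⟨k, h, hU⟩
      exact ⟨_, hU, ((proj_eq_iff n hH w _).2 ⟨k, by simp⟩).symm⟩
  rw [this]
  exact isOpen_iUnion fun k => isOpen_iUnion fun h =>
    hU.preimage ((continuous_shift n k).mul continuous_const)

lemma isClosed_diag (n : ℕ) : IsClosed (diagSubgroup n : Set (Torus n)) := by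
  have : (diagSubgroup n : Set (Torus n)) = ⋂ i, {z : Torus n | z i = z 0} := by
    ext z; simp [mem_diag_iff]
  rw [this]
  exact isClosed_iInter fun i => isClosed_eq (continuous_apply _) (continuous_apply _)

lemma t2Space_quot (n : ℕ) [NeZero n] : T2Space (Quot (orbitRel n (diagSubgroup n))) := by
  rw [t2Space_iff_of_isOpenQuotientMap (isOpenQuotientMap_proj n le_rfl)]
  have : {q : Torus n × Torus n | proj n (diagSubgroup n) q.1 = proj n (diagSubgroup n) q.2} =
      ⋃ k : ZMod n, (fun q : Torus n × Torus n => (shift n k q.1)⁻¹ * q.2) ⁻¹'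
        (diagSubgroup n : Set (Torus n)) := by
    ext q
    simp [proj_eq_iff n le_rfl]
  rw [this]
  exact isClosed_iUnion_of_finite fun k => (isClosed_diag n).preimage
    (((continuous_shift n k).comp continuous_fst).inv.mul continuous_snd)

lemma exists_pow_eq (n : ℕ) [NeZero n] (u : Circle) : ∃ t : Circle, t ^ n = u := by
  refine ⟨Circle.exp (Complex.arg u / n), ?_⟩
  rw [← Circle.exp_nsmul, nsmul_eq_mul, mul_div_cancel₀ _ (NeZero.ne (n : ℝ)), Circle.exp_arg]

/-- The map `z ↦ ([z], ∏ i, z i)`. -/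
def projProd (n : ℕ) [NeZero n] (z : Torus n) : Quot (orbitRel n (diagSubgroup n)) × Circle :=
  (proj n (diagSubgroup n) z, ∏ i, z i)

lemma projProd_surjective (n : ℕ) [NeZero n] : Function.Surjective (projProd n) := by
  rintro ⟨b, s⟩
  obtain ⟨z, rfl⟩ := (isQuotientMap_proj n _).surjective b
  obtain ⟨t, ht⟩ := exists_pow_eq n (s * (∏ i, z i)⁻¹)
  refine ⟨z * fun _ => t, Prod.ext ?_ ?_⟩
  · refine ((proj_eq_iff n le_rfl _ _).2 ⟨0, ?_⟩).symm
    rw [shift_zero, inv_mul_cancel_left]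
    exact ⟨t, rfl⟩
  · simp [projProd, Finset.prod_mul_distrib, ZMod.card, ht]

lemma isQuotientMap_projProd (n : ℕ) [NeZero n] : Topology.IsQuotientMap (projProd n) := by
  have := t2Space_quot n
  have hc : Continuous (projProd n) :=
    (isQuotientMap_proj n _).continuous.prodMk
      (continuous_finsetProd _ fun i _ => continuous_apply i)
  exact hc.isClosedMap.isQuotientMap hc (projProd_surjective n)

lemma ker_proj_roots (n : ℕ) [NeZero n] :
    Setoid.ker (proj n (rootsSubgroup n)) = Setoid.ker (projProd n) := by
  ext z w
  have hle : rootsSubgroup n ≤ diagSubgroup n := fun z hz => ((mem_roots_iff n z).1 hz).1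
  have hp : ∀ k, ∏ i, ((shift n k z)⁻¹ * w) i = 1 ↔ ∏ i, z i = ∏ i, w i := fun k => by
    simp only [Pi.mul_apply, Pi.inv_apply, Finset.prod_mul_distrib, Finset.prod_inv_distrib,
      prod_shift, inv_mul_eq_one]
  simp only [Setoid.ker_def, projProd, Prod.mk.injEq, proj_eq_iff n hle, proj_eq_iff n le_rfl,
    mem_roots_iff, hp, exists_and_right]

/-- For `n ≥ 1` there is a homeomorphism
`(𝕋^n/𝒢ₙ)/(ℤ/nℤ) ≅ ((𝕋^n/𝕋)/(ℤ/nℤ)) × 𝕋`, where `𝒢ₙ` is the subgroup of diagonal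
`n`-th roots of unity and `ℤ/nℤ` acts by cyclic permutation of coordinates; all
quotients carry the quotient topology. -/
theorem stmt3 (n : ℕ) [NeZero n] :
    Nonempty (Quot (orbitRelG n) ≃ₜ Quot (orbitRelT n) × Circle) := by
  have hf := isQuotientMap_proj n (rootsSubgroup n)
  have hg := isQuotientMap_projProd n
  let f : C(Torus n, Quot (orbitRel n (rootsSubgroup n))) := ⟨_, hf.continuous⟩
  let g : C(Torus n, Quot (orbitRel n (diagSubgroup n)) × Circle) := ⟨_, hg.continuous⟩
  have hker : Setoid.ker f = Setoid.ker g := ker_proj_roots n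
  have e : Quotient (Setoid.ker f) ≃ₜ Quotient (Setoid.ker g) := by
    rw [hker]
    exact Homeomorph.refl _
  exact ⟨(Topology.IsQuotientMap.homeomorph (f := f) hf).symm.trans
    (e.trans (Topology.IsQuotientMap.homeomorph (f := g) hg))⟩
end
end

section
/- Let n ≥ 1, let k be an integer, and set d = n/gcd(n,k). A class [z] ∈ 𝕋^n/𝕋 is a fixed point of the k-shift (i.e. k · [z] = [z]) if and only if there exists a unique complex number ω with ω^d = 1 such that z(i + k) = ω^{-1} · z(i) for all i ∈ ℤ/nℤ. Consequently, the fixed-point set of the k-shift on 𝕋^n/𝕋 is the disjoint union, over the d-th roots of unity ω in ℂ, of the sets 𝔜(n,k,ω). -/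
/-!
Equality `[k · z] = [z]` in `𝕋^n/𝕋` says that `k · z` and `z` differ by a diagonal element, i.e.
that `z (i + k) = t⁻¹ z i` for one `t ∈ 𝕋` (`mk_shift_eq_iff`). Such a multiplier is determined by
its value at `i = 0`, so it is unique, and it does not change when `z` is multiplied by a diagonal
element (`multiplier_unique`). Iterating the relation `d = n / gcd(n, k)` times shifts the index by
`d k ≡ 0` modulo `n`, which forces `t ^ d = 1` (`multiplier_pow_eq_one`).
-/

noncomputable section

/-- The subset `𝔜(n,k,ω) ⊆ 𝕋^n/𝕋`: classes `[z]` of tuples `z ∈ 𝕋^n` with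
`z(i + k) = ω⁻¹ z(i)` for all `i ∈ ℤ/nℤ`. -/
def frakY (n : ℕ) [NeZero n] (k : ℤ) (ω : ℂ) : Set (TorusQuot n) :=
  {x : TorusQuot n | ∃ z : Torus n, x = QuotientGroup.mk z ∧
    ∀ i : ZMod n, (z (i + (k : ZMod n)) : ℂ) = ω⁻¹ * z i}

lemma mem_diagSubgroup_iff (n : ℕ) (w : Torus n) :
    w ∈ diagSubgroup n ↔ ∃ t : Circle, ∀ i, w i = t := by
  constructor
  · rintro ⟨t, rfl⟩
    exact ⟨t, fun _ => rfl⟩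
  · rintro ⟨t, ht⟩
    exact ⟨t, funext fun i => (ht i).symm⟩

lemma mk_shift_eq_iff (n : ℕ) (k : ZMod n) (z : Torus n) :
    (QuotientGroup.mk (shift n k z) : TorusQuot n) = QuotientGroup.mk z ↔
      ∃ t : Circle, ∀ i, z (i + k) = t⁻¹ * z i := by
  rw [QuotientGroup.eq, mem_diagSubgroup_iff]
  refine exists_congr fun t => forall_congr' fun i => ?_
  change (z (i + k))⁻¹ * z i = t ↔ _
  rw [inv_mul_eq_iff_eq_mul, eq_inv_mul_iff_mul_eq, mul_comm t, eq_comm]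

/-- A complex multiplier relating `z` to its shift is automatically of modulus one, hence
`[z]` is fixed by the shift. -/
lemma mk_shift_eq_of_multiplier (n : ℕ) (k : ZMod n) (z : Torus n) (ω : ℂ)
    (h : ∀ i, (z (i + k) : ℂ) = ω⁻¹ * z i) :
    (QuotientGroup.mk (shift n k z) : TorusQuot n) = QuotientGroup.mk z := by
  have hω : ω⁻¹ = ((z (0 + k) / z 0 : Circle) : ℂ) := by
    rw [Circle.coe_div, h 0, mul_div_cancel_right₀ _ (Circle.coe_ne_zero _)]
  refine (mk_shift_eq_iff n k z).2 ⟨(z (0 + k) / z 0)⁻¹, fun i => ?_⟩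
  rw [inv_inv]
  apply Circle.ext
  rw [h i, Circle.coe_mul, hω]

lemma multiplier_unique (n : ℕ) (k : ZMod n) (z z' : Torus n) (ω ω' : ℂ)
    (h : ∀ i, (z (i + k) : ℂ) = ω⁻¹ * z i) (h' : ∀ i, (z' (i + k) : ℂ) = ω'⁻¹ * z' i)
    (hzz' : (QuotientGroup.mk z : TorusQuot n) = QuotientGroup.mk z') : ω = ω' := by
  rw [QuotientGroup.eq, mem_diagSubgroup_iff] at hzz'
  obtain ⟨t, ht⟩ := hzz'
  have hz' : ∀ i, (z' i : ℂ) = z i * t := fun i => by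
    rw [← Circle.coe_mul, ← ht i, Pi.mul_apply, Pi.inv_apply, mul_inv_cancel_left]
  have h0 := h' 0
  rw [hz', hz', h 0, mul_assoc] at h0
  exact inv_injective (mul_right_cancel₀
    (mul_ne_zero (Circle.coe_ne_zero _) (Circle.coe_ne_zero _)) h0)

lemma multiplier_pow_eq_one (n : ℕ) (k : ℤ) (z : Torus n) (t : Circle)
    (h : ∀ i, z (i + (k : ZMod n)) = t⁻¹ * z i) : t ^ (n / Int.gcd n k) = 1 := by
  have iter : ∀ m : ℕ, z (m * (k : ZMod n)) = t⁻¹ ^ m * z 0 := by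
    intro m
    induction m with
    | zero => simp
    | succ m ih =>
      rw [Nat.cast_succ, add_mul, one_mul, h, ih, pow_succ', mul_assoc]
  have hdk : ((n / Int.gcd n k : ℕ) : ZMod n) * (k : ZMod n) = 0 := by
    have hg : Int.gcd n k ∣ n := by exact_mod_cast Int.gcd_dvd_left (n : ℤ) k
    obtain ⟨a, ha⟩ := Int.gcd_dvd_right (n : ℤ) k
    have hn : ((n / Int.gcd n k : ℕ) : ℤ) * (Int.gcd n k : ℤ) = n := by
      exact_mod_cast Nat.div_mul_cancel hg
    have hk : ((n / Int.gcd n k : ℕ) : ℤ) * k = n * a := by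
      generalize n / Int.gcd n k = e at hn ⊢
      rw [← hn, mul_assoc, ← ha]
    rw [← Int.cast_natCast, ← Int.cast_mul, hk, Int.cast_mul, Int.cast_natCast,
      ZMod.natCast_self, zero_mul]
  have := iter (n / Int.gcd n k)
  rw [hdk, right_eq_mul, inv_pow, inv_eq_one] at this
  exact this


/-- Let `n ≥ 1`, `k ∈ ℤ`, `d = n/gcd(n,k)`.  A class `[z] ∈ 𝕋^n/𝕋` is
a fixed point of the `k`-shift iff there is a unique `ω ∈ ℂ` with `ω^d = 1` such that
`z(i+k) = ω⁻¹ z(i)` for all `i`.  Consequently the fixed-point set of the `k`-shift on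
`𝕋^n/𝕋` is the disjoint union over the `d`-th roots of unity `ω` of the sets
`𝔜(n,k,ω)`. -/
theorem stmt7 (n : ℕ) [NeZero n] (k : ℤ) (d : ℕ) (hd : d = n / Int.gcd n k) :
    (∀ z : Torus n,
      (QuotientGroup.mk (shift n (k : ZMod n) z) : TorusQuot n) = QuotientGroup.mk z ↔
        ∃! ω : ℂ, ω ^ d = 1 ∧
          ∀ i : ZMod n, (z (i + (k : ZMod n)) : ℂ) = ω⁻¹ * z i) ∧
    ({x : TorusQuot n | ∃ z : Torus n, x = QuotientGroup.mk z ∧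
        (QuotientGroup.mk (shift n (k : ZMod n) z) : TorusQuot n) = x}
      = ⋃ ω ∈ {ω : ℂ | ω ^ d = 1}, frakY n k ω) ∧
    Set.Pairwise {ω : ℂ | ω ^ d = 1}
      (fun ω₁ ω₂ => Disjoint (frakY n k ω₁) (frakY n k ω₂)) := by
  have key : ∀ z : Torus n,
      (QuotientGroup.mk (shift n (k : ZMod n) z) : TorusQuot n) = QuotientGroup.mk z →
        ∃ ω : ℂ, ω ^ d = 1 ∧ ∀ i : ZMod n, (z (i + (k : ZMod n)) : ℂ) = ω⁻¹ * z i := by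
    intro z hz
    obtain ⟨t, ht⟩ := (mk_shift_eq_iff n k z).1 hz
    refine ⟨t, ?_, fun i => by rw [ht i, Circle.coe_mul, Circle.coe_inv]⟩
    rw [hd, ← Circle.coe_pow, multiplier_pow_eq_one n k z t ht, Circle.coe_one]
  refine ⟨fun z => ⟨fun hz => ?_, ?_⟩, ?_, ?_⟩
  · obtain ⟨ω, hω, h⟩ := key z hz
    exact ⟨ω, ⟨hω, h⟩, fun ω' h' => multiplier_unique n k z z ω' ω h'.2 h rfl⟩
  · rintro ⟨ω, ⟨-, h⟩, -⟩
    exact mk_shift_eq_of_multiplier n k z ω h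
  · ext x
    simp only [Set.mem_iUnion, Set.mem_ofPred_eq, frakY, exists_prop]
    constructor
    · rintro ⟨z, rfl, hz⟩
      obtain ⟨ω, hω, h⟩ := key z hz
      exact ⟨ω, hω, z, rfl, h⟩
    · rintro ⟨ω, -, z, rfl, h⟩
      exact ⟨z, rfl, mk_shift_eq_of_multiplier n k z ω h⟩
  · intro ω₁ _ ω₂ _ hne
    refine Set.disjoint_left.2 ?_
    rintro x ⟨z, rfl, h⟩ ⟨z', hzz', h'⟩
    exact hne (multiplier_unique n k z z' ω₁ ω₂ h h' hzz')
end
end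

section
/- Let n ≥ 1 and let k be an integer with gcd(n,k) = 1. Then the fixed-point set of the k-shift acting on 𝕋^n/𝕋 has exactly n elements. Consequently, the extended quotient (𝕋^n/𝕋) ⫽ (ℤ/nℤ) contains exactly φ(n)·n points arising from the shifts k with gcd(n,k) = 1, where φ is the Euler totient function. -/
/-!
If `[z]` is fixed by the `k`-shift, then `z (i + k) = t * z i` for a constant `t`. When `k` is
coprime to `n` it generates `ℤ/nℤ`, so *every* shift multiplies `z` by a constant, and hence `z` is
a constant multiple of a character of `ℤ/nℤ` (`exists_addChar_of_shift`). Conversely the class of a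
character is fixed by all shifts. A character takes the value `1` at `0`, so distinct characters
have distinct classes, and the fixed-point set of the `k`-shift is in bijection with the `n`
characters of `ℤ/nℤ` (`fixedSet_eq_range`, `charClass_injective`).

Since these classes are fixed by the whole group, the orbits in `X̃` above a unit `k` are
singletons (`eq_of_extRel`); the points in question therefore correspond to pairs consisting of a
unit of `ℤ/nℤ` and a character.
-/

noncomputable section

/-- The fixed-point set of the `k`-shift acting on `𝕋^n/𝕋`. -/
def fixedSet (n : ℕ) [NeZero n] (k : ZMod n) : Set (TorusQuot n) :=
  {x : TorusQuot n | ∃ z : Torus n, x = QuotientGroup.mk z ∧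
    (QuotientGroup.mk (shift n k z) : TorusQuot n) = x}

/-- The space `X̃ = {(x,γ) ∈ X × Γ : γ·x = x}` for `X = 𝕋^n/𝕋` and `Γ = ℤ/nℤ`
acting by the cyclic shifts. -/
def ExtTilde (n : ℕ) [NeZero n] : Type :=
  {p : TorusQuot n × ZMod n // p.1 ∈ fixedSet n p.2}

/-- The `Γ`-orbit relation `g·(x,γ) = (g·x,γ)` on `X̃`, for `Γ = ℤ/nℤ`. -/
def ExtRel (n : ℕ) [NeZero n] (p q : ExtTilde n) : Prop :=
  p.1.2 = q.1.2 ∧ ∃ (g : ZMod n) (z : Torus n),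
    p.1.1 = QuotientGroup.mk z ∧ q.1.1 = QuotientGroup.mk (shift n g z)

/-- The extended quotient `(𝕋^n/𝕋) ⫽ (ℤ/nℤ) = X̃/Γ`. -/
def ExtQuot (n : ℕ) [NeZero n] : Type := Quot (ExtRel n)

theorem mk_eq_mk_iff {n : ℕ} (z w : Torus n) :
    (QuotientGroup.mk z : TorusQuot n) = QuotientGroup.mk w ↔ ∃ t : Circle, ∀ i, w i = t * z i := by
  rw [QuotientGroup.eq]
  constructor
  · rintro ⟨t, ht⟩
    refine ⟨t, fun i => ?_⟩
    have h : t = (z i)⁻¹ * w i := congrFun ht i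
    rw [h, mul_comm, mul_inv_cancel_left]
  · rintro ⟨t, ht⟩
    refine ⟨t, funext fun i => ?_⟩
    change t = (z i)⁻¹ * w i
    rw [ht i, mul_comm t, inv_mul_cancel_left]

/-- The class in `𝕋^n/𝕋` of a character of `ℤ/nℤ`, viewed as the tuple of its values. -/
def charClass (n : ℕ) (χ : AddChar (ZMod n) Circle) : TorusQuot n :=
  QuotientGroup.mk (fun i => χ i : Torus n)

theorem charClass_injective (n : ℕ) : Function.Injective (charClass n) := by
  intro χ ψ h
  obtain ⟨t, ht⟩ := (mk_eq_mk_iff _ _).1 h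
  -- Evaluating at `0` shows that the constant is `1`.
  have h0 : t = 1 := by simpa using (ht 0).symm
  ext1 i
  simpa [h0] using (ht i).symm

theorem mk_shift_eq_of_mk_eq_charClass {n : ℕ} {z : Torus n} {χ : AddChar (ZMod n) Circle}
    (h : QuotientGroup.mk z = charClass n χ) (g : ZMod n) :
    (QuotientGroup.mk (shift n g z) : TorusQuot n) = charClass n χ := by
  obtain ⟨t, ht⟩ := (mk_eq_mk_iff _ _).1 h
  refine (mk_eq_mk_iff _ _).2 ⟨t * (χ g)⁻¹, fun i => ?_⟩
  have hi := ht (i + g)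
  rw [AddChar.map_add_eq_mul] at hi
  change χ i = t * (χ g)⁻¹ * z (i + g)
  rw [mul_right_comm, ← hi, mul_inv_cancel_right]

/-- A tuple that a generating shift multiplies by a constant is a multiple of a character. -/
theorem exists_addChar_of_shift {n : ℕ} [NeZero n] {k : ZMod n} (hk : IsUnit k) (z : Torus n)
    (t : Circle) (h : ∀ i, z (i + k) = t * z i) :
    ∃ χ : AddChar (ZMod n) Circle, ∀ i, χ i = (z 0)⁻¹ * z i := by
  have hpow (m : ℕ) (i : ZMod n) : z (i + m * k) = t ^ m * z i := by
    induction m with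
    | zero => simp
    | succ m ih =>
      rw [Nat.cast_succ, add_one_mul, ← add_assoc, h, ih, pow_succ', mul_assoc]
  -- Every `j` is a multiple of the unit `k`.
  have hall (j : ZMod n) : ∃ c : Circle, ∀ i, z (i + j) = c * z i := by
    obtain ⟨u, rfl⟩ := hk
    refine ⟨t ^ (j * ↑u⁻¹ : ZMod n).val, fun i => ?_⟩
    rw [← hpow, ZMod.natCast_zmod_val, Units.inv_mul_cancel_right]
  refine ⟨{ toFun := fun i => (z 0)⁻¹ * z i
            map_zero_eq_one' := inv_mul_cancel _
            map_add_eq_mul' := fun i j => ?_ }, fun i => rfl⟩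
  obtain ⟨c, hc⟩ := hall j
  have h0 := hc 0
  rw [zero_add] at h0
  rw [hc i, h0, mul_comm c (z 0), inv_mul_cancel_left, mul_comm c, mul_assoc]

theorem fixedSet_eq_range {n : ℕ} [NeZero n] {k : ZMod n} (hk : IsUnit k) :
    fixedSet n k = Set.range (charClass n) := by
  ext x
  constructor
  · rintro ⟨z, rfl, hz⟩
    obtain ⟨t, ht⟩ := (mk_eq_mk_iff _ _).1 hz.symm
    obtain ⟨χ, hχ⟩ := exists_addChar_of_shift hk z t ht
    exact ⟨χ, ((mk_eq_mk_iff _ _).2 ⟨_, hχ⟩).symm⟩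
  · rintro ⟨χ, rfl⟩
    exact ⟨fun i => χ i, rfl, mk_shift_eq_of_mk_eq_charClass rfl k⟩

theorem card_addChar_circle (n : ℕ) [NeZero n] : Nat.card (AddChar (ZMod n) Circle) = n := by
  rw [Nat.card_congr (AddChar.circleEquivComplex (α := ZMod n)).toEquiv, Nat.card_eq_fintype_card,
    AddChar.card_eq, ZMod.card]

theorem gcd_eq_one_iff_isUnit (n : ℕ) (k : ℤ) : Int.gcd n k = 1 ↔ IsUnit (k : ZMod n) := by
  rw [ZMod.coe_int_isUnit_iff_isCoprime, Int.isCoprime_iff_gcd_eq_one]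

/-- Above a unit of `ℤ/nℤ`, the orbits in `X̃` are singletons. -/
theorem eq_of_extRel {n : ℕ} [NeZero n] {p q : ExtTilde n} (h : ExtRel n p q)
    (hp : IsUnit p.1.2) : p = q := by
  obtain ⟨h2, g, z, hpz, hqz⟩ := h
  have hmem := p.2
  rw [fixedSet_eq_range hp] at hmem
  obtain ⟨χ, hχ⟩ := hmem
  refine Subtype.ext (Prod.ext ?_ h2)
  rw [hqz, mk_shift_eq_of_mk_eq_charClass (hpz.symm.trans hχ.symm), hχ]

open Classical in
/-- The pair `(x, γ)` underlying a point of the extended quotient when `γ` is a unit (it is then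
well defined, the orbit being a singleton), and `none` otherwise. -/
def unitPair (n : ℕ) [NeZero n] : ExtQuot n → Option (TorusQuot n × ZMod n) :=
  Quot.lift (fun p => if IsUnit p.1.2 then some p.1 else none) fun p q h => by
    by_cases hp : IsUnit p.1.2
    · rw [eq_of_extRel h hp]
    · have hq : ¬ IsUnit q.1.2 := h.1 ▸ hp
      simp only [if_neg hp, if_neg hq]

/-- The point of the extended quotient given by a unit and a character. -/
def unitPoint (n : ℕ) [NeZero n] (a : (ZMod n)ˣ × AddChar (ZMod n) Circle) : ExtQuot n :=
  Quot.mk _ ⟨(charClass n a.2, a.1), by rw [fixedSet_eq_range a.1.isUnit]; exact ⟨a.2, rfl⟩⟩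

theorem unitPoint_injective (n : ℕ) [NeZero n] : Function.Injective (unitPoint n) := by
  have key (a) : unitPair n (unitPoint n a) = some (charClass n a.2, (a.1 : ZMod n)) :=
    if_pos a.1.isUnit
  intro a b h
  have h' := congrArg (unitPair n) h
  rw [key, key, Option.some_inj, Prod.mk.injEq] at h'
  exact Prod.ext (Units.ext h'.2) (charClass_injective n h'.1)

theorem range_unitPoint (n : ℕ) [NeZero n] :
    Set.range (unitPoint n) = {c : ExtQuot n | ∃ p : ExtTilde n, Quot.mk (ExtRel n) p = c ∧
        ∃ k : ℤ, (k : ZMod n) = p.1.2 ∧ Int.gcd n k = 1} := by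
  ext c
  constructor
  · rintro ⟨a, rfl⟩
    obtain ⟨k, hk⟩ := ZMod.intCast_surjective (a.1 : ZMod n)
    exact ⟨_, rfl, k, hk, (gcd_eq_one_iff_isUnit n k).2 (hk ▸ a.1.isUnit)⟩
  · rintro ⟨⟨⟨x, γ⟩, hx⟩, rfl, k, hk, hgcd⟩
    have hu : IsUnit γ := by
      have := (gcd_eq_one_iff_isUnit n k).1 hgcd
      rwa [hk] at this
    obtain ⟨χ, rfl⟩ := (fixedSet_eq_range hu).subset hx
    exact ⟨(hu.unit, χ), rfl⟩

/-- Let `n ≥ 1` and `k ∈ ℤ` with `gcd(n,k) = 1`.  The fixed-point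
set of the `k`-shift on `𝕋^n/𝕋` has exactly `n` elements.  Consequently the extended
quotient `(𝕋^n/𝕋) ⫽ (ℤ/nℤ)` contains exactly `φ(n)·n` points arising from the shifts
`k` with `gcd(n,k) = 1`. -/
theorem stmt10 (n : ℕ) [NeZero n] :
    (∀ k : ℤ, Int.gcd n k = 1 → Nat.card (fixedSet n (k : ZMod n)) = n) ∧
    Nat.card {c : ExtQuot n | ∃ p : ExtTilde n, Quot.mk (ExtRel n) p = c ∧
        ∃ k : ℤ, (k : ZMod n) = p.1.2 ∧ Int.gcd n k = 1}
      = Nat.totient n * n := by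
  refine ⟨fun k hk => ?_, ?_⟩
  · rw [fixedSet_eq_range ((gcd_eq_one_iff_isUnit n k).1 hk),
      Nat.card_range_of_injective (charClass_injective n), card_addChar_circle]
  · rw [← range_unitPoint, Nat.card_range_of_injective (unitPoint_injective n), Nat.card_prod,
      card_addChar_circle, Nat.card_eq_fintype_card, ZMod.card_units_eq_totient]
end
end

section
/- Let n ≥ 1 and let ω ∈ ℂ be a primitive n-th root of unity. Then ∑_{r=0}^{n-1} ∏_{j=0}^{n-1} (1 + ω^{rj}) = ∑_{d | n, d odd} φ(d) · 2^{n/d}, where φ is the Euler totient function and the right-hand sum is over the odd positive divisors d of n. -/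
noncomputable section

/-!
Group the indices `r` by `k = gcd(n, r)`. Then `ω ^ r` is a primitive `m`-th root of unity with
`m = n / k`, so the inner product runs `k` times through the full period `∏_{j < m} (1 + ζ ^ j)`.
Evaluating `X ^ m - 1 = ∏_{j < m} (X - ζ ^ j)` at `-1` shows that one period equals `1 - (-1) ^ m`,
which is `2` for odd `m` and `0` for even `m`. There are `φ(n / k)` indices `r` with
`gcd(n, r) = k`, and the substitution `d = n / k` gives the stated divisor sum.
-/

lemma prod_one_add_pow_period {m : ℕ} (hm : 0 < m) {ζ : ℂ} (hζ : IsPrimitiveRoot ζ m) :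
    ∏ j ∈ Finset.range m, (1 + ζ ^ j) = 1 - (-1) ^ m := by
  have h := congrArg (Polynomial.eval (-1)) (X_pow_sub_C_eq_prod hζ hm (one_pow m))
  simp only [Polynomial.eval_sub, Polynomial.eval_pow, Polynomial.eval_X, Polynomial.eval_C,
    Polynomial.eval_prod, mul_one] at h
  have h2 : ∏ j ∈ Finset.range m, (-1 - ζ ^ j)
      = (-1) ^ m * ∏ j ∈ Finset.range m, (1 + ζ ^ j) := by
    rw [← Finset.card_range m, ← Finset.prod_const, Finset.card_range, ← Finset.prod_mul_distrib]
    exact Finset.prod_congr rfl fun j _ => by ring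
  rw [h2] at h
  have h3 : ((-1 : ℂ) ^ m) * (-1) ^ m = 1 := by rw [← mul_pow]; simp
  linear_combination (-(-1) ^ m) * h + (1 - ∏ j ∈ Finset.range m, (1 + ζ ^ j)) * h3

lemma prod_one_add_pow_mul (m k : ℕ) {ζ : ℂ} (hζ : ζ ^ m = 1) :
    ∏ j ∈ Finset.range (m * k), (1 + ζ ^ j) = (∏ j ∈ Finset.range m, (1 + ζ ^ j)) ^ k := by
  induction k with
  | zero => simp
  | succ k ih =>
    rw [Nat.mul_succ, Finset.prod_range_add, ih, pow_succ]
    simp [pow_add, pow_mul, hζ]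

lemma prod_one_add_pow_eq_ite {n : ℕ} (hn : 0 < n) {ω : ℂ} (hω : IsPrimitiveRoot ω n) (r : ℕ) :
    ∏ j ∈ Finset.range n, (1 + ω ^ (r * j))
      = if Odd (n / n.gcd r) then (2 : ℂ) ^ n.gcd r else 0 := by
  have hk : 0 < n.gcd r := Nat.gcd_pos_of_pos_left r hn
  have hm : 0 < n / n.gcd r := Nat.div_pos (Nat.gcd_le_left r hn) hk
  have hp : IsPrimitiveRoot (ω ^ r) (n / n.gcd r) := by
    have hfin : IsOfFinOrder ω := isOfFinOrder_iff_pow_eq_one.2 ⟨n, hn, hω.pow_eq_one⟩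
    have h := IsPrimitiveRoot.orderOf (ω ^ r)
    rwa [hfin.orderOf_pow, ← hω.eq_orderOf] at h
  have h := prod_one_add_pow_mul (n / n.gcd r) (n.gcd r) hp.pow_eq_one
  rw [Nat.div_mul_cancel (Nat.gcd_dvd_left n r), prod_one_add_pow_period hm hp] at h
  simp only [pow_mul, h]
  split_ifs with ho
  · rw [ho.neg_one_pow]; norm_num
  · rw [(Nat.not_odd_iff_even.1 ho).neg_one_pow, sub_self, zero_pow hk.ne']

/-- Let `n ≥ 1` and let `ω ∈ ℂ` be a primitive `n`-th root of
unity.  Then `∑_{r=0}^{n-1} ∏_{j=0}^{n-1} (1 + ω^{rj}) = ∑_{d ∣ n, d odd} φ(d)·2^{n/d}`,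
where `φ` is the Euler totient function and the right-hand sum is over the odd
positive divisors `d` of `n`. -/
theorem stmt15 (n : ℕ) (hn : 1 ≤ n) (ω : ℂ) (hω : IsPrimitiveRoot ω n) :
    ∑ r ∈ Finset.range n, ∏ j ∈ Finset.range n, (1 + ω ^ (r * j))
      = ∑ d ∈ n.divisors.filter (fun d => Odd d),
          (Nat.totient d : ℂ) * 2 ^ (n / d) := by
  rw [Finset.sum_congr rfl fun r _ => prod_one_add_pow_eq_ite hn hω r, Finset.sum_filter,
    ← Nat.sum_div_divisors, ← Finset.sum_fiberwise_of_maps_to (t := n.divisors)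
      (g := fun r => n.gcd r) fun r _ => Nat.mem_divisors.2 ⟨Nat.gcd_dvd_left n r, by omega⟩]
  refine Finset.sum_congr rfl fun k hk => ?_
  have hkn := Nat.dvd_of_mem_divisors hk
  have hc : ∀ r ∈ (Finset.range n).filter (fun r => n.gcd r = k),
      (if Odd (n / n.gcd r) then (2 : ℂ) ^ n.gcd r else 0)
        = if Odd (n / k) then (2 : ℂ) ^ k else 0 := by
    intro r hr
    rw [(Finset.mem_filter.1 hr).2]
  rw [Finset.sum_congr rfl hc, Finset.sum_const, nsmul_eq_mul, Nat.totient_div_of_dvd hkn,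
    Nat.div_div_self hkn (by omega), mul_ite, mul_zero]
end
end

section
/- Let n ≥ 1 and let V = ℂ^n with standard basis (e_i) indexed by i ∈ ℤ/nℤ. Let the cyclic group ℤ/nℤ act on V by the shift k · e_i = e_{i+k}, and let it act on the exterior algebra Λ(V) by the induced algebra automorphisms. Then n times the complex dimension of the subspace of ℤ/nℤ-invariant elements of Λ(V) equals ∑_{d | n, d odd} φ(d) · 2^{n/d}, where φ is the Euler totient function and the sum is over the odd positive divisors d of n. -/
/-!
The shifts of `ℂ^n` are simultaneously diagonalised by the basis of additive characters `ψ` of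
`ℤ/nℤ`: the shift by `k` scales `ψ` by `ψ (-k)`. Hence the wedge products `e_S` over finite sets `S`
of characters form a basis of `Λ(ℂ^n)` on which `k` acts by the scalar `(∏_{ψ ∈ S} ψ) (-k)`
(`map_basis_of_diag`), and the invariants are spanned by those `e_S` for which the product of the
characters in `S` is trivial (`finrank_common_fixed`). By orthogonality of characters, `n` times
the number of such `S` is `∑_k ∑_S ∏_{ψ ∈ S} ψ k = ∑_k ∏_ψ (1 + ψ k)`.

If `k` has order `d` in `ℤ/nℤ`, the values `ψ k` run `n / d` times through the `d`-th roots of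
unity, and the product of `1 + ω` over those roots is `1 - (-1)^d`; so the inner product is
`2^(n/d)` for odd `d` and `0` for even `d` (`prod_one_add_char`). Collecting the `φ(d)` elements of
each order `d` gives the formula.
-/

noncomputable section

/-- The coordinate shift `k · e_i = e_{i+k}` on `V = ℂ^n` (coordinates indexed by
`ℤ/nℤ`), as a linear map: on coordinate functions, `(k · v)(i) = v(i - k)`. -/
def shiftLin (n : ℕ) (k : ZMod n) : (ZMod n → ℂ) →ₗ[ℂ] (ZMod n → ℂ) where
  toFun := fun v i => v (i - k)
  map_add' := fun _ _ => rfl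
  map_smul' := fun _ _ => rfl

/-- The subspace of `ℤ/nℤ`-invariant elements of the exterior algebra `Λ(ℂ^n)`,
for the action by the algebra automorphisms induced by the coordinate shifts. -/
def extInvariants (n : ℕ) : Submodule ℂ (ExteriorAlgebra ℂ (ZMod n → ℂ)) where
  carrier := {x | ∀ k : ZMod n, ExteriorAlgebra.map (shiftLin n k) x = x}
  add_mem' := fun hx hy k => by rw [map_add, hx k, hy k]
  zero_mem' := fun k => map_zero _
  smul_mem' := fun c x hx k => by rw [map_smul, hx k]

open Module Finset

/-- If `f` is diagonal in the basis `b`, then `Λ(f)` is diagonal in the induced basis of the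
exterior algebra, with the products of the eigenvalues of `f` as eigenvalues. -/
lemma map_basis_of_diag {I V : Type*} [LinearOrder I] [AddCommGroup V] [Module ℂ V]
    (b : Basis I ℂ V) (f : V →ₗ[ℂ] V) (c : I → ℂ) (hf : ∀ i, f (b i) = c i • b i)
    (s : Finset I) :
    ExteriorAlgebra.map f (b.ExteriorAlgebra s) = (∏ i ∈ s, c i) • b.ExteriorAlgebra s := by
  rw [ExteriorAlgebra.basis_apply_ofCard b rfl, ExteriorAlgebra.ιMulti_family,
    ExteriorAlgebra.map_apply_ιMulti]
  set e := Set.powersetCard.ofFinEmbEquiv.symm (Set.powersetCard.ofCard (s := s) rfl) with he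
  have h1 : (⇑f ∘ (⇑b ∘ ⇑e)) = fun i => c (e i) • (b ∘ e) i := by
    funext i; simp [hf]
  have h2 : ∏ i, c (e i) = ∏ i ∈ s, c i := by
    have h3 : s = Finset.univ.map e.toEmbedding := by
      ext i
      rw [Finset.mem_map, he]
      have h4 := Set.powersetCard.mem_range_ofFinEmbEquiv_symm_iff_mem
        (Set.powersetCard.ofCard (s := s) rfl) i
      simp only [Finset.mem_univ, true_and]
      exact h4.symm
    conv_rhs => rw [h3, Finset.prod_map]
    rfl
  rw [h1, ← h2]
  exact (ExteriorAlgebra.ιMulti ℂ s.card).toMultilinearMap.map_smul_univ _ _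

/-- The common fixed space of a family of operators that are all diagonal in the basis `B` is spanned
by the basis vectors fixed by every operator, so its dimension is the number of these. -/
lemma finrank_common_fixed {ι K W : Type*} [Fintype ι] [AddCommGroup W] [Module ℂ W]
    (B : Basis ι ℂ W) (T : K → W →ₗ[ℂ] W) (c : K → ι → ℂ)
    (hT : ∀ k i, T k (B i) = c k i • B i) (P : Submodule ℂ W)
    (hP : ∀ x, x ∈ P ↔ ∀ k, T k x = x) (Q : Finset ι) (hQ : ∀ i, i ∈ Q ↔ ∀ k, c k i = 1) :
    finrank ℂ P = #Q := by
  have hspan : P = Submodule.span ℂ (Set.range fun i : Q => B i) := by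
    apply le_antisymm
    · intro x hx
      rw [← B.sum_repr x]
      refine Submodule.sum_mem _ fun i _ => ?_
      by_cases hi : i ∈ Q
      · exact Submodule.smul_mem _ _ (Submodule.subset_span ⟨⟨i, hi⟩, rfl⟩)
      · obtain ⟨k, hk⟩ := not_forall.mp (mt (hQ i).2 hi)
        have h := congrArg (fun y => B.repr y i) ((hP x).1 hx k)
        have h4 : B.repr (T k x) i = c k i * B.repr x i := by
          classical
          conv_lhs => rw [← B.sum_repr x]
          simp only [map_sum, map_smul, hT, Basis.repr_self, Finsupp.coe_finsetSum,
            Finset.sum_apply, Finsupp.smul_apply, Finsupp.single_apply, smul_eq_mul]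
          simp [mul_comm]
        have h5 : B.repr x i = 0 := by
          by_contra h0
          exact hk (mul_right_cancel₀ h0 (by rw [one_mul, ← h4]; exact h))
        simp [h5]
    · rw [Submodule.span_le]
      rintro _ ⟨i, rfl⟩
      exact (hP _).2 fun k => by rw [hT, (hQ _).1 i.2 k, one_smul]
  rw [hspan]
  refine (finrank_span_eq_card (B.linearIndependent.comp _ Subtype.val_injective)).trans ?_
  simp

/-- The first `d` powers of `η` are the roots of `X ^ d - 1`, which is evaluated at `-1`; the first
`d * m` powers repeat them `m` times. -/
lemma prod_one_add_primitiveRoot {η : ℂ} {d : ℕ} (hd : 0 < d) (h : IsPrimitiveRoot η d)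
    {m : ℕ} (hm : m ≠ 0) :
    ∏ j ∈ range (d * m), (1 + η ^ j) = if Odd d then 2 ^ m else 0 := by
  have h1 : ∏ j ∈ range d, (1 + η ^ j) = if Odd d then 2 else 0 := by
    have h2 : ∏ ζ ∈ Polynomial.nthRootsFinset d (1 : ℂ), (1 + ζ) = 1 - (-1) ^ d := by
      simpa using (h.pow_sub_pow_eq_prod_sub_mul 1 (-1) hd).symm
    have h3 : ∏ j ∈ range d, (1 + η ^ j)
        = ∏ ζ ∈ Polynomial.nthRootsFinset d (1 : ℂ), (1 + ζ) := by
      refine Finset.prod_bij (fun j _ => η ^ j) ?_ ?_ ?_ (fun _ _ => rfl)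
      · intro j _
        rw [Polynomial.mem_nthRootsFinset hd, ← pow_mul, mul_comm, pow_mul, h.pow_eq_one, one_pow]
      · intro i hi j hj hij
        exact h.pow_inj (mem_range.1 hi) (mem_range.1 hj) hij
      · intro ζ hζ
        have : NeZero d := ⟨hd.ne'⟩
        obtain ⟨i, hi, hi'⟩ :=
          h.eq_pow_of_pow_eq_one ((Polynomial.mem_nthRootsFinset hd _).1 hζ)
        exact ⟨i, mem_range.2 hi, hi'⟩
    rw [h3, h2]
    split_ifs with ho
    · rw [ho.neg_one_pow]; norm_num
    · rw [(Nat.not_odd_iff_even.1 ho).neg_one_pow, sub_self]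
  have h4 : ∏ j ∈ range (d * m), (1 + η ^ j) = (∏ j ∈ range d, (1 + η ^ j)) ^ m := by
    clear hm
    induction m with
    | zero => simp
    | succ m ih =>
      rw [Nat.mul_succ, Finset.prod_range_add, ih, pow_succ]
      simp [pow_add, pow_mul, h.pow_eq_one]
  rw [h4, h1]
  split_ifs
  · rfl
  · exact zero_pow hm

/-- Since `ψ` ranges over `x ↦ stdAddChar (j * x)` for `j` in `ZMod n`, the numbers `ψ k` are the
first `n` powers of a primitive root of unity whose order is the additive order of `k`. -/
lemma prod_one_add_char (n : ℕ) [NeZero n] (k : ZMod n) :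
    ∏ ψ : AddChar (ZMod n) ℂ, (1 + ψ k)
      = if Odd (addOrderOf k) then 2 ^ (n / addOrderOf k) else 0 := by
  have hη : IsPrimitiveRoot (ZMod.stdAddChar k : ℂ) (addOrderOf k) := by
    rw [IsPrimitiveRoot.iff_def]
    have key (l : ℕ) : (ZMod.stdAddChar k : ℂ) ^ l = 1 ↔ addOrderOf k ∣ l := by
      rw [← AddChar.map_nsmul_eq_pow, addOrderOf_dvd_iff_nsmul_eq_zero,
        ← ZMod.injective_stdAddChar.eq_iff, AddChar.map_zero_eq_one]
    exact ⟨(key _).2 dvd_rfl, fun l hl => (key l).1 hl⟩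
  have hbij : Function.Bijective fun j : ZMod n => AddChar.mulShift (ZMod.stdAddChar (N := n)) j := by
    rw [Fintype.bijective_iff_injective_and_card]
    exact ⟨AddChar.to_mulShift_inj_of_isPrimitive (ZMod.isPrimitive_stdAddChar n),
      AddChar.card_eq.symm⟩
  have hdvd : addOrderOf k ∣ n := by
    simpa using addOrderOf_dvd_card (x := k)
  rw [← prod_one_add_primitiveRoot (addOrderOf_pos k) hη
      (Nat.div_pos (Nat.le_of_dvd (NeZero.pos n) hdvd) (addOrderOf_pos k)).ne',
    Nat.mul_div_cancel' hdvd,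
    ← hbij.prod_comp]
  simp only [AddChar.mulShift_apply]
  symm
  refine Finset.prod_bij (fun j _ => (j : ZMod n)) (by simp) ?_ ?_ ?_
  · intro a ha b hb hab
    rw [ZMod.natCast_eq_natCast_iff'] at hab
    rwa [Nat.mod_eq_of_lt (mem_range.1 ha), Nat.mod_eq_of_lt (mem_range.1 hb)] at hab
  · intro j _
    exact ⟨j.val, mem_range.2 j.val_lt, ZMod.natCast_zmod_val j⟩
  · intro j _
    rw [← AddChar.map_nsmul_eq_pow, nsmul_eq_mul]

/-- Let `n ≥ 1` and let `ℤ/nℤ` act on `Λ(ℂ^n)` by the algebra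
automorphisms induced by the shift `k · e_i = e_{i+k}` on `ℂ^n`.  Then `n` times the
dimension of the subspace of invariants equals `∑_{d ∣ n, d odd} φ(d)·2^{n/d}`. -/
theorem stmt17 (n : ℕ) [NeZero n] :
    n * Module.finrank ℂ (extInvariants n)
      = ∑ d ∈ n.divisors.filter (fun d => Odd d), Nat.totient d * 2 ^ (n / d) := by
  classical
  -- The basis of the exterior algebra needs some linear order on the index type.
  let _ : LinearOrder (AddChar (ZMod n) ℂ) :=
    LinearOrder.lift' (Fintype.equivFin _) (Fintype.equivFin _).injective
  let Q : Finset (Finset (AddChar (ZMod n) ℂ)) := univ.filter fun S => ∑ ψ ∈ S, ψ = 0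
  have hrank : finrank ℂ (extInvariants n) = #Q := by
    refine finrank_common_fixed (AddChar.complexBasis (ZMod n)).ExteriorAlgebra
      (fun k => (ExteriorAlgebra.map (shiftLin n k)).toLinearMap)
      (fun k S => ∏ ψ ∈ S, ψ (-k)) (fun k S => ?_) _ (fun x => Iff.rfl) Q fun S => ?_
    · refine map_basis_of_diag _ _ (fun ψ : AddChar (ZMod n) ℂ => ψ (-k)) (fun ψ => ?_) S
      funext i
      simp [shiftLin, sub_eq_neg_add, AddChar.map_add_eq_mul]
    · simp only [Q, mem_filter, mem_univ, true_and, AddChar.eq_zero_iff, AddChar.sum_apply]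
      exact ⟨fun h k => h (-k), fun h k => by simpa using h (-k)⟩
  have hcount : ((n * #Q : ℕ) : ℂ) = ∑ k : ZMod n, ∏ ψ : AddChar (ZMod n) ℂ, (1 + ψ k) := by
    simp_rw [Finset.prod_one_add, powerset_univ]
    rw [Finset.sum_comm]
    simp_rw [← AddChar.sum_apply, AddChar.sum_eq_ite]
    simp [Q, Finset.sum_ite, mul_comm]
  have hsum : n * #Q = ∑ k : ZMod n,
      if Odd (addOrderOf k) then 2 ^ (n / addOrderOf k) else 0 := by
    simp_rw [prod_one_add_char] at hcount
    exact_mod_cast hcount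
  rw [hrank, hsum, ← Finset.sum_fiberwise_of_maps_to (s := univ) (t := n.divisors)
    (g := fun k : ZMod n => addOrderOf k)
    (fun k _ => Nat.mem_divisors.2 ⟨by simpa using addOrderOf_dvd_card (x := k), NeZero.ne n⟩),
    Finset.sum_filter]
  refine Finset.sum_congr rfl fun d hd => ?_
  rw [Finset.sum_congr rfl (g := fun _ => if Odd d then 2 ^ (n / d) else 0)
    (fun k hk => by rw [(mem_filter.1 hk).2]), Finset.sum_const,
    IsAddCyclic.card_addOrderOf_eq_totient (by simpa using Nat.dvd_of_mem_divisors hd)]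
  split_ifs <;> simp
end
end

section
/- Let n ≥ 1 and let the cyclic group ℤ/nℤ act on Λ(ℂ^n) by the algebra automorphisms induced from the coordinate shift action on ℂ^n. Then the dimension of the space of ℤ/nℤ-invariants in the even part ⊕_{k even} Λ^k(ℂ^n) equals the dimension of the space of ℤ/nℤ-invariants in the odd part ⊕_{k odd} Λ^k(ℂ^n); each equals one half of the dimension of the full invariant subspace of Λ(ℂ^n). -/
/-!
Let `v = ∑ i, e_i` and let `d` be the average of the coordinate functions. Both are fixed by the
coordinate shifts, and `d v = 1`. On `Λ(ℂ^n)` consider the operator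
`T x = v ∧ x + d ⌋ x`, where `d ⌋ ·` is the left contraction by `d`.

Since `d ⌋ ·` is an antiderivation of square zero, `T ∘ T = d v = 1` (`swapOp_swapOp`).
Since `v` and `d` are shift-invariant, `T` commutes with the `ℤ/nℤ`-action (`map_swapOp`), and as
`v ∧ ·` raises and `d ⌋ ·` lowers the degree by one, `T` exchanges the even and the odd part. Hence
`T` restricts to an isomorphism between the even and the odd invariants.

Parity is handled through the grade involution `α`, which is `(-1)^k` on `Λ^k`: the even and odd
parts are its eigenspaces for `1` and `-1`, and `T` anticommutes with it. As `α` commutes with the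
shifts, the invariants are the direct sum of the even and the odd invariants, which gives the
second claim.
-/

noncomputable section

/-- The `k`-th exterior power `Λ^k(ℂ^n)`, as the `k`-th graded piece
`(range ι)^k` of the exterior algebra. -/
def extPower (n k : ℕ) : Submodule ℂ (ExteriorAlgebra ℂ (ZMod n → ℂ)) :=
  LinearMap.range (ExteriorAlgebra.ι ℂ : (ZMod n → ℂ) →ₗ[ℂ] _) ^ k

/-- The even part `⊕_{k even} Λ^k(ℂ^n)` of the exterior algebra. -/
def evenPart (n : ℕ) : Submodule ℂ (ExteriorAlgebra ℂ (ZMod n → ℂ)) :=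
  ⨆ k ∈ {k : ℕ | Even k}, extPower n k

/-- The odd part `⊕_{k odd} Λ^k(ℂ^n)` of the exterior algebra. -/
def oddPart (n : ℕ) : Submodule ℂ (ExteriorAlgebra ℂ (ZMod n → ℂ)) :=
  ⨆ k ∈ {k : ℕ | Odd k}, extPower n k

open CliffordAlgebra in
lemma contractLeft_map {R M N : Type*} [CommRing R] [AddCommGroup M] [Module R M]
    [AddCommGroup N] [Module R N] (f : M →ₗ[R] N) (d : Module.Dual R N)
    (x : ExteriorAlgebra R M) :
    contractLeft d (ExteriorAlgebra.map f x) =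
      ExteriorAlgebra.map f (contractLeft (d ∘ₗ f) x) := by
  induction x using CliffordAlgebra.left_induction with
  | algebraMap r =>
    rw [AlgHom.commutes, contractLeft_algebraMap, contractLeft_algebraMap, map_zero]
  | add x y hx hy => simp only [map_add, hx, hy]
  | ι_mul x m hx =>
    have h : ExteriorAlgebra.map f (CliffordAlgebra.ι _ m) = CliffordAlgebra.ι _ (f m) :=
      ExteriorAlgebra.map_apply_ι f m
    rw [map_mul, h, contractLeft_ι_mul, contractLeft_ι_mul, hx, map_sub, map_mul, map_smul, h]
    rfl

open CliffordAlgebra in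
lemma involute_contractLeft {R M : Type*} [CommRing R] [AddCommGroup M] [Module R M]
    {Q : QuadraticForm R M} (d : Module.Dual R M) (x : CliffordAlgebra Q) :
    involute (contractLeft d x) = -contractLeft d (involute x) := by
  induction x using CliffordAlgebra.left_induction with
  | algebraMap r =>
    rw [AlgHom.commutes, contractLeft_algebraMap, map_zero, neg_zero]
  | add x y hx hy => simp only [map_add, hx, hy, neg_add]
  | ι_mul x m hx =>
    rw [map_mul involute, involute_ι, neg_mul, map_neg, contractLeft_ι_mul, contractLeft_ι_mul, map_sub,
      map_mul involute, map_smul, hx, involute_ι]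
    simp

lemma involute_map {R M N : Type*} [CommRing R] [AddCommGroup M] [Module R M]
    [AddCommGroup N] [Module R N] (f : M →ₗ[R] N) (x : ExteriorAlgebra R M) :
    CliffordAlgebra.involute (ExteriorAlgebra.map f x) =
      ExteriorAlgebra.map f (CliffordAlgebra.involute x) := by
  induction x using CliffordAlgebra.left_induction with
  | algebraMap r => simp only [AlgHom.commutes]
  | add x y hx hy => simp only [map_add, hx, hy]
  | ι_mul x m hx =>
    have h : ExteriorAlgebra.map f (CliffordAlgebra.ι _ m) = CliffordAlgebra.ι _ (f m) :=
      ExteriorAlgebra.map_apply_ι f m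
    rw [map_mul, map_mul, map_mul, map_mul, hx, h, CliffordAlgebra.involute_ι,
      CliffordAlgebra.involute_ι, map_neg, h]

lemma evenPart_eq (n : ℕ) : evenPart n = CliffordAlgebra.evenOdd 0 0 := by
  simp only [evenPart, CliffordAlgebra.evenOdd, extPower, iSup_subtype, Set.mem_ofPred_eq,
    ZMod.natCast_eq_zero_iff_even]

lemma oddPart_eq (n : ℕ) : oddPart n = CliffordAlgebra.evenOdd 0 1 := by
  simp only [oddPart, CliffordAlgebra.evenOdd, extPower, iSup_subtype, Set.mem_ofPred_eq,
    ZMod.natCast_eq_one_iff_odd]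

lemma isCompl_evenPart_oddPart (n : ℕ) : IsCompl (evenPart n) (oddPart n) := by
  rw [evenPart_eq, oddPart_eq]
  exact CliffordAlgebra.evenOdd_isCompl 0

/-- The even and odd components of an element are its symmetrization and antisymmetrization under
the grade involution. -/
lemma half_add_mem_evenPart (n : ℕ) (x : ExteriorAlgebra ℂ (ZMod n → ℂ)) :
    (2⁻¹ : ℂ) • (x + CliffordAlgebra.involute x) ∈ evenPart n ∧
      (2⁻¹ : ℂ) • (x - CliffordAlgebra.involute x) ∈ oddPart n := by
  have hx : x ∈ evenPart n ⊔ oddPart n := by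
    rw [(isCompl_evenPart_oddPart n).sup_eq_top]; trivial
  obtain ⟨a, ha, b, hb, rfl⟩ := Submodule.mem_sup.1 hx
  have ha' := ha
  have hb' := hb
  rw [evenPart_eq] at ha'
  rw [oddPart_eq] at hb'
  rw [map_add, CliffordAlgebra.involute_eq_of_mem_even ha',
    CliffordAlgebra.involute_eq_of_mem_odd hb']
  have h1 : (2⁻¹ : ℂ) • (a + b + (a + -b)) = a := by module
  have h2 : (2⁻¹ : ℂ) • (a + b - (a + -b)) = b := by module
  rw [h1, h2]
  exact ⟨ha, hb⟩

lemma mem_evenPart_iff {n : ℕ} {x : ExteriorAlgebra ℂ (ZMod n → ℂ)} :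
    x ∈ evenPart n ↔ CliffordAlgebra.involute x = x := by
  refine ⟨fun h => CliffordAlgebra.involute_eq_of_mem_even (evenPart_eq n ▸ h), fun h => ?_⟩
  have := (half_add_mem_evenPart n x).1
  rw [h] at this
  convert this using 1
  module

lemma mem_oddPart_iff {n : ℕ} {x : ExteriorAlgebra ℂ (ZMod n → ℂ)} :
    x ∈ oddPart n ↔ CliffordAlgebra.involute x = -x := by
  refine ⟨fun h => CliffordAlgebra.involute_eq_of_mem_odd (oddPart_eq n ▸ h), fun h => ?_⟩
  have := (half_add_mem_evenPart n x).2
  rw [h] at this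
  convert this using 1
  module

/-- The average of the coordinate functions on `ℂ^n`, a shift-invariant linear form taking the
value `1` at the all-ones vector. -/
def avgForm (n : ℕ) [NeZero n] : Module.Dual ℂ (ZMod n → ℂ) :=
  (n : ℂ)⁻¹ • ∑ i, LinearMap.proj i

lemma avgForm_one (n : ℕ) [NeZero n] : avgForm n 1 = 1 := by
  simp [avgForm, ZMod.card]

lemma avgForm_comp_shiftLin (n : ℕ) [NeZero n] (k : ZMod n) :
    avgForm n ∘ₗ shiftLin n k = avgForm n := by
  ext1 i
  ext
  simp only [avgForm, shiftLin, LinearMap.comp_apply, LinearMap.smul_apply, LinearMap.sum_apply,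
    LinearMap.proj_apply, LinearMap.coe_mk, AddHom.coe_mk]
  congr 1
  exact Fintype.sum_equiv (Equiv.subRight k) _ _ fun _ => rfl

/-- The operator `x ↦ v ∧ x + d ⌋ x` on `Λ(ℂ^n)`, for `v` the all-ones vector and `d` the average
of the coordinate functions. -/
def swapOp (n : ℕ) [NeZero n] :
    ExteriorAlgebra ℂ (ZMod n → ℂ) →ₗ[ℂ] ExteriorAlgebra ℂ (ZMod n → ℂ) :=
  LinearMap.mulLeft ℂ (ExteriorAlgebra.ι ℂ 1) + CliffordAlgebra.contractLeft (avgForm n)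

lemma swapOp_apply (n : ℕ) [NeZero n] (x : ExteriorAlgebra ℂ (ZMod n → ℂ)) :
    swapOp n x = ExteriorAlgebra.ι ℂ 1 * x + CliffordAlgebra.contractLeft (avgForm n) x := rfl

lemma swapOp_swapOp (n : ℕ) [NeZero n] (x : ExteriorAlgebra ℂ (ZMod n → ℂ)) :
    swapOp n (swapOp n x) = x := by
  have h := CliffordAlgebra.contractLeft_ι_mul (Q := (0 : QuadraticForm ℂ (ZMod n → ℂ)))
    (d := avgForm n) 1 x
  have h' := CliffordAlgebra.contractLeft_contractLeft (Q := (0 : QuadraticForm ℂ (ZMod n → ℂ)))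
    (d := avgForm n) x
  rw [swapOp_apply, swapOp_apply, map_add, h', mul_add, ← mul_assoc, ExteriorAlgebra.ι_sq_zero]
  -- `ExteriorAlgebra.ι` agrees with `CliffordAlgebra.ι 0` only up to unfolding.
  erw [h]
  rw [avgForm_one, one_smul, zero_mul, zero_add, add_zero]
  exact add_sub_cancel _ _

lemma map_swapOp (n : ℕ) [NeZero n] (k : ZMod n) (x : ExteriorAlgebra ℂ (ZMod n → ℂ)) :
    ExteriorAlgebra.map (shiftLin n k) (swapOp n x) =
      swapOp n (ExteriorAlgebra.map (shiftLin n k) x) := by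
  have h : shiftLin n k 1 = 1 := rfl
  rw [swapOp_apply, swapOp_apply, map_add, map_mul, ExteriorAlgebra.map_apply_ι, h,
    contractLeft_map, avgForm_comp_shiftLin]

lemma involute_swapOp (n : ℕ) [NeZero n] (x : ExteriorAlgebra ℂ (ZMod n → ℂ)) :
    CliffordAlgebra.involute (swapOp n x) = -swapOp n (CliffordAlgebra.involute x) := by
  have h : CliffordAlgebra.involute (ExteriorAlgebra.ι ℂ (1 : ZMod n → ℂ)) =
    -ExteriorAlgebra.ι ℂ 1 := CliffordAlgebra.involute_ι 1
  rw [swapOp_apply, swapOp_apply, map_add, map_mul, h, involute_contractLeft, neg_mul, neg_add]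

lemma swapOp_mem_extInvariants {n : ℕ} [NeZero n] {x : ExteriorAlgebra ℂ (ZMod n → ℂ)}
    (hx : x ∈ extInvariants n) : swapOp n x ∈ extInvariants n := fun k => by
  rw [map_swapOp, hx k]

lemma involute_mem_extInvariants {n : ℕ} {x : ExteriorAlgebra ℂ (ZMod n → ℂ)}
    (hx : x ∈ extInvariants n) : CliffordAlgebra.involute x ∈ extInvariants n := fun k => by
  rw [← involute_map, hx k]

lemma swapOp_mem_odd {n : ℕ} [NeZero n] {x : ExteriorAlgebra ℂ (ZMod n → ℂ)}
    (hx : x ∈ evenPart n ⊓ extInvariants n) : swapOp n x ∈ oddPart n ⊓ extInvariants n := by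
  refine ⟨mem_oddPart_iff.2 ?_, swapOp_mem_extInvariants hx.2⟩
  rw [involute_swapOp, mem_evenPart_iff.1 hx.1]

lemma swapOp_mem_even {n : ℕ} [NeZero n] {x : ExteriorAlgebra ℂ (ZMod n → ℂ)}
    (hx : x ∈ oddPart n ⊓ extInvariants n) : swapOp n x ∈ evenPart n ⊓ extInvariants n := by
  refine ⟨mem_evenPart_iff.2 ?_, swapOp_mem_extInvariants hx.2⟩
  rw [involute_swapOp, mem_oddPart_iff.1 hx.1, map_neg, neg_neg]

/-- The isomorphism between even and odd invariants given by `swapOp`, which is its own inverse. -/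
def evenEquivOdd (n : ℕ) [NeZero n] :
    ↥(evenPart n ⊓ extInvariants n) ≃ₗ[ℂ] ↥(oddPart n ⊓ extInvariants n) :=
  LinearEquiv.ofLinearMap
    ((swapOp n).restrict fun _ => swapOp_mem_odd)
    ((swapOp n).restrict fun _ => swapOp_mem_even)
    (LinearMap.ext fun x => Subtype.ext (swapOp_swapOp n x))
    (LinearMap.ext fun x => Subtype.ext (swapOp_swapOp n x))

lemma even_sup_odd_extInvariants (n : ℕ) :
    (evenPart n ⊓ extInvariants n) ⊔ (oddPart n ⊓ extInvariants n) = extInvariants n := by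
  refine le_antisymm (sup_le inf_le_right inf_le_right) fun x hx => ?_
  have hx' := involute_mem_extInvariants hx
  obtain ⟨h0, h1⟩ := half_add_mem_evenPart n x
  refine Submodule.mem_sup.2 ⟨_, ⟨h0, Submodule.smul_mem _ _ (add_mem hx hx')⟩,
    _, ⟨h1, Submodule.smul_mem _ _ (sub_mem hx hx')⟩, ?_⟩
  module

/-- For the action of `ℤ/nℤ` on `Λ(ℂ^n)` induced by the coordinate
shifts, the dimension of the invariants in the even part equals the dimension of the
invariants in the odd part, and each is half the dimension of the full space of
invariants. -/
theorem stmt18 (n : ℕ) [NeZero n] :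
    Module.finrank ℂ ↥(evenPart n ⊓ extInvariants n)
        = Module.finrank ℂ ↥(oddPart n ⊓ extInvariants n) ∧
    2 * Module.finrank ℂ ↥(evenPart n ⊓ extInvariants n)
        = Module.finrank ℂ ↥(extInvariants n) := by
  have hE := (evenEquivOdd n).finrank_eq
  refine ⟨hE, ?_⟩
  -- A basis of `ℂ^n` indexed by a linear order gives a finite basis of the exterior algebra.
  have : FiniteDimensional ℂ (ExteriorAlgebra ℂ (ZMod n → ℂ)) :=
    (Module.finBasis ℂ (ZMod n → ℂ)).ExteriorAlgebra.finiteDimensional_of_finite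
  have hd : (evenPart n ⊓ extInvariants n) ⊓ (oddPart n ⊓ extInvariants n) = ⊥ :=
    ((isCompl_evenPart_oddPart n).disjoint.mono inf_le_left inf_le_left).eq_bot
  have hs := Submodule.finrank_sup_add_finrank_inf_eq
    (evenPart n ⊓ extInvariants n) (oddPart n ⊓ extInvariants n)
  rw [even_sup_odd_extInvariants, hd, finrank_bot] at hs
  omega
end
end
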